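/- arXiv:2403.06395 — 5 statements merged into one kernel-verified Lean document; each statement's English description precedes it below -/
import Mathlib

section
/- Let T : ℂ[t] → ℂ[t] be a linear operator on the vector space of polynomials with complex coefficients such that for every n ≥ 0 the polynomial T(t^n) has degree at most n. Then there exists a sequence of polynomials (p_k)_{k≥0} in ℂ[t] with deg p_k ≤ k for every k, such that for every polynomial w one has T(w) = Σ_{k≥0} p_k · w^{(k)}/k!, where w^{(k)} denotes the k-th derivative of w (the sum is finite, since w^{(k)} = 0 for k > deg w). -/
open Polynomial

/-- The coefficients, defined by triangular recursion. -/
noncomputable def diffCoeff (T : Polynomial ℂ →ₗ[ℂ] Polynomial ℂ) : ℕ → Polynomial ℂ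
  | n => T (X ^ n) - ∑ k : Fin n, diffCoeff T k.1 * ((n.choose k.1 : ℂ) • X ^ (n - k.1))
termination_by n => n
decreasing_by exact k.2

lemma diffCoeff_eq (T : Polynomial ℂ →ₗ[ℂ] Polynomial ℂ) (n : ℕ) :
    diffCoeff T n = T (X ^ n) -
      ∑ k ∈ Finset.range n, diffCoeff T k * ((n.choose k : ℂ) • X ^ (n - k)) := by
  rw [diffCoeff, Finset.sum_range]

lemma diffCoeff_natDegree (T : Polynomial ℂ →ₗ[ℂ] Polynomial ℂ)
    (hT : ∀ n : ℕ, (T (X ^ n)).natDegree ≤ n) (n : ℕ) : (diffCoeff T n).natDegree ≤ n := by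
  induction n using Nat.strong_induction_on with
  | _ n ih =>
    rw [diffCoeff_eq]
    refine (natDegree_sub_le_of_le (hT n) (n := n) ?_).trans (max_self n).le
    refine natDegree_sum_le_of_forall_le _ _ fun k hk => ?_
    have hk' := Finset.mem_range.1 hk
    have h1 := ih k hk'
    have h2 : ((n.choose k : ℂ) • (X : ℂ[X]) ^ (n - k)).natDegree ≤ n - k :=
      (natDegree_smul_le _ _).trans (natDegree_X_pow_le _)
    have h3 := natDegree_mul_le (p := diffCoeff T k)
      (q := (n.choose k : ℂ) • (X : ℂ[X]) ^ (n - k))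
    omega

lemma diff_X_pow (n k : ℕ) :
    ((k.factorial : ℂ))⁻¹ • (derivative^[k] ((X : ℂ[X]) ^ n))
      = (n.choose k : ℂ) • X ^ (n - k) := by
  have hk : (k.factorial : ℂ) ≠ 0 := by exact_mod_cast k.factorial_ne_zero
  rw [iterate_derivative_X_pow_eq_smul, Nat.descFactorial_eq_factorial_mul_choose,
    smul_smul]
  push_cast
  rw [inv_mul_cancel_left₀ hk]

lemma diffCoeff_X_pow (T : Polynomial ℂ →ₗ[ℂ] Polynomial ℂ) (N n : ℕ) (h : n ≤ N) :
    T (X ^ n) = ∑ k ∈ Finset.range (N + 1),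
      ((k.factorial : ℂ))⁻¹ • (diffCoeff T k * derivative^[k] (X ^ n)) := by
  simp_rw [← mul_smul_comm, diff_X_pow]
  rw [← Finset.sum_subset (Finset.range_mono (Nat.succ_le_succ h)), Finset.sum_range_succ]
  · conv_rhs => rw [diffCoeff_eq T n]
    simp
  · intro k _ hk
    have : n < k := by simpa using hk
    simp [Nat.choose_eq_zero_of_lt this]

/-- Every linear operator on `ℂ[t]` sending `t^n` to a polynomial of degree at most `n`
is a differential operator of (possibly) infinite order with polynomial coefficients
`p_k` of degree at most `k`:  `T w = Σ_k p_k · w^{(k)} / k!`. -/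
theorem triangular_operator_is_differential_operator
    (T : Polynomial ℂ →ₗ[ℂ] Polynomial ℂ)
    (hT : ∀ n : ℕ, (T (X ^ n)).natDegree ≤ n) :
    ∃ p : ℕ → Polynomial ℂ, (∀ k, (p k).natDegree ≤ k) ∧
      ∀ w : Polynomial ℂ,
        T w = ∑ k ∈ Finset.range (w.natDegree + 1),
          ((k.factorial : ℂ))⁻¹ • (p k * derivative^[k] w) := by
  refine ⟨diffCoeff T, diffCoeff_natDegree T hT, fun w => ?_⟩
  have key : ∀ N : ℕ, ∀ c : ℕ → ℂ,
      T (∑ i ∈ Finset.range (N + 1), c i • X ^ i) = ∑ k ∈ Finset.range (N + 1),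
        ((k.factorial : ℂ))⁻¹ • (diffCoeff T k *
          derivative^[k] (∑ i ∈ Finset.range (N + 1), c i • X ^ i)) := by
    intro N c
    simp_rw [map_sum, map_smul, iterate_derivative_sum, iterate_derivative_smul,
      Finset.mul_sum, Finset.smul_sum]
    rw [Finset.sum_comm]
    refine Finset.sum_congr rfl fun i hi => ?_
    rw [diffCoeff_X_pow T N i (Nat.lt_succ_iff.1 (Finset.mem_range.1 hi)), Finset.smul_sum]
    refine Finset.sum_congr rfl fun k _ => ?_
    rw [mul_smul_comm, smul_comm]
  have hw : w = ∑ i ∈ Finset.range (w.natDegree + 1), w.coeff i • X ^ i := by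
    conv_lhs => rw [w.as_sum_range_C_mul_X_pow]
    simp_rw [smul_eq_C_mul]
  have := key w.natDegree w.coeff
  rwa [← hw] at this
end

section
/- Let T : ℂ[t] → ℂ[t] be a linear operator such that u_n := T(t^n) has degree at most n for every n ≥ 0, and let (q_i)_{i≥0} be polynomials in ℂ[t] with deg q_i ≤ i for every i. Define s_{k,i}(t) = Σ_{j=i}^{k} C(k,j) · (u_j^{(i)}(t)/i!) · (−t)^{k−j} for 0 ≤ i ≤ k (and s_{k,i} = 0 for i > k), and r_k(t) = Σ_{i=0}^{k} s_{k,i}(t) · q_i(t) for k ≥ 0. Then for every polynomial w one has Σ_{i≥0} q_i(t) · (T w)^{(i)}(t)/i! = Σ_{k≥0} r_k(t) · w^{(k)}(t)/k! (both sums are finite). -/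
open Polynomial

lemma aux_hasse (k : ℕ) (w : Polynomial ℂ) :
    (k.factorial : ℂ)⁻¹ • derivative^[k] w = hasseDeriv k w := by
  have h := congrArg (fun f => f w) (Polynomial.factorial_smul_hasseDeriv (R := ℂ) k)
  change k.factorial • hasseDeriv k w = _ at h
  rw [← h, ← Nat.cast_smul_eq_nsmul ℂ, smul_smul, inv_mul_cancel₀, one_smul]
  exact_mod_cast k.factorial_ne_zero

lemma aux_zero (k : ℕ) (w : Polynomial ℂ) (h : w.natDegree < k) : hasseDeriv k w = 0 :=
  hasseDeriv_eq_zero_of_lt_natDegree w k h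

lemma aux_mono (M n j : ℕ) (hn : n < M) :
    ∑ k ∈ Finset.range M, ((k.choose j : ℕ) : Polynomial ℂ) * (-X) ^ (k - j) *
      (((n.choose k : ℕ) : Polynomial ℂ) * X ^ (n - k)) = if j = n then 1 else 0 := by
  have h1 : ∑ k ∈ Finset.range M, ((k.choose j : ℕ) : Polynomial ℂ) * (-X) ^ (k - j) *
      (((n.choose k : ℕ) : Polynomial ℂ) * X ^ (n - k)) =
      ∑ k ∈ Finset.Ico j (n + 1), ((k.choose j : ℕ) : Polynomial ℂ) * (-X) ^ (k - j) *
      (((n.choose k : ℕ) : Polynomial ℂ) * X ^ (n - k)) := by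
    symm
    apply Finset.sum_subset
    · intro k hk
      simp only [Finset.mem_Ico, Finset.mem_range] at *
      omega
    · intro k _ hk
      simp only [Finset.mem_Ico, not_and_or, not_le, not_lt] at hk
      rcases hk with hk | hk
      · simp [Nat.choose_eq_zero_of_lt hk]
      · simp [Nat.choose_eq_zero_of_lt (show n < k by omega)]
  rw [h1]
  by_cases hj : j ≤ n
  · obtain ⟨d, rfl⟩ := Nat.exists_eq_add_of_le hj
    rw [Finset.sum_Ico_eq_sum_range]
    have h2 : ((-X + X : Polynomial ℂ)) ^ d * ((j + d).choose j : ℕ) =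
        if j = j + d then 1 else 0 := by
      rcases d with _ | d <;> simp
    rw [← h2, add_pow, Finset.sum_mul, show j + d + 1 - j = d + 1 by omega]
    apply Finset.sum_congr rfl
    intro m hm
    have hm' : m ≤ d := by simpa [Nat.lt_succ_iff] using hm
    have h3 := Nat.choose_mul (n := j + d) (k := j + m) (s := j) (by omega)
    rw [Nat.add_sub_cancel_left, Nat.add_sub_cancel_left] at h3
    have h4 := congrArg (Nat.cast (R := Polynomial ℂ)) h3
    push_cast at h4
    rw [Nat.add_sub_cancel_left, show j + d - (j + m) = d - m by omega]
    linear_combination (-X) ^ m * X ^ (d - m) * h4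
  · rw [Finset.Ico_eq_empty (by omega), if_neg (by omega), Finset.sum_empty]

lemma aux_coeff (M j : ℕ) (w : Polynomial ℂ) (hw : w.natDegree < M) :
    ∑ k ∈ Finset.range M, ((k.choose j : ℕ) : Polynomial ℂ) * (-X) ^ (k - j) *
      hasseDeriv k w = C (w.coeff j) := by
  have hk : ∀ k, hasseDeriv k w = ∑ n ∈ Finset.range M,
      C (w.coeff n) * (((n.choose k : ℕ) : Polynomial ℂ) * X ^ (n - k)) := by
    intro k
    conv_lhs => rw [w.as_sum_range' M hw]
    rw [map_sum]
    apply Finset.sum_congr rfl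
    intro n _
    rw [hasseDeriv_monomial, ← C_mul_X_pow_eq_monomial, C_mul]
    simp only [map_natCast]
    ring
  simp only [hk, Finset.mul_sum]
  rw [Finset.sum_comm]
  have : ∀ n ∈ Finset.range M, ∑ k ∈ Finset.range M,
      ((k.choose j : ℕ) : Polynomial ℂ) * (-X) ^ (k - j) *
      (C (w.coeff n) * (((n.choose k : ℕ) : Polynomial ℂ) * X ^ (n - k))) =
      if j = n then C (w.coeff n) else 0 := by
    intro n hn
    have h := aux_mono M n j (Finset.mem_range.1 hn)
    have h5 : (if j = n then C (w.coeff n) else 0 : Polynomial ℂ) =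
        C (w.coeff n) * (if j = n then 1 else 0) := by split_ifs <;> simp
    rw [h5, ← h, Finset.mul_sum]
    apply Finset.sum_congr rfl
    intro k _
    ring
  rw [Finset.sum_congr rfl this, Finset.sum_ite_eq]
  split_ifs with h
  · rfl
  · rw [coeff_eq_zero_of_natDegree_lt, C_0]
    simp at h
    omega

/-- Multiplication formula for triangular operators written as differential operators of
infinite order with polynomial coefficients: if `u_n = T(t^n)` has degree at most `n`,
`deg q_i ≤ i`, `s_{k,i}(t) = Σ_{j=i}^k C(k,j) (u_j^{(i)}(t)/i!) (−t)^{k−j}` and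
`r_k = Σ_{i=0}^k s_{k,i} q_i`, then
`Σ_i q_i · (Tw)^{(i)}/i! = Σ_k r_k · w^{(k)}/k!` for every polynomial `w`. -/
theorem differential_operator_multiplication_formula
    (T : Polynomial ℂ →ₗ[ℂ] Polynomial ℂ)
    (u : ℕ → Polynomial ℂ) (hu : ∀ n, u n = T (X ^ n))
    (hdeg : ∀ n, (u n).natDegree ≤ n)
    (q : ℕ → Polynomial ℂ) (hq : ∀ i, (q i).natDegree ≤ i)
    (s : ℕ → ℕ → Polynomial ℂ)
    (hs : ∀ k i, s k i = ∑ j ∈ Finset.Icc i k,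
        ((k.choose j : ℂ) * (i.factorial : ℂ)⁻¹) • (derivative^[i] (u j) * (-X) ^ (k - j)))
    (r : ℕ → Polynomial ℂ)
    (hr : ∀ k, r k = ∑ i ∈ Finset.range (k + 1), s k i * q i) :
    ∀ w : Polynomial ℂ,
      ∑ i ∈ Finset.range ((T w).natDegree + 1),
          (i.factorial : ℂ)⁻¹ • (q i * derivative^[i] (T w)) =
        ∑ k ∈ Finset.range (w.natDegree + 1),
          (k.factorial : ℂ)⁻¹ • (r k * derivative^[k] w) := by
  intro w
  set M := w.natDegree + 1 with hM
  have hTw : T w = ∑ j ∈ Finset.range M, C (w.coeff j) * u j := by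
    conv_lhs => rw [w.as_sum_range' M (by omega)]
    rw [map_sum]
    apply Finset.sum_congr rfl
    intro n _
    rw [hu, ← C_mul_X_pow_eq_monomial, ← smul_eq_C_mul, map_smul, smul_eq_C_mul]
  have hdT : (T w).natDegree < M := by
    rw [hTw, hM, Nat.lt_succ_iff]
    apply natDegree_sum_le_of_forall_le
    intro j hj
    have := natDegree_C_mul_le (w.coeff j) (u j)
    have := hdeg j
    have := Finset.mem_range.1 hj
    omega
  have hs' : ∀ k ∈ Finset.range M, ∀ i, s k i = ∑ j ∈ Finset.range M,
      ((k.choose j : ℕ) : Polynomial ℂ) * (-X) ^ (k - j) * hasseDeriv i (u j) := by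
    intro k hk i
    rw [hs]
    have : ∀ j, ((k.choose j : ℂ) * (i.factorial : ℂ)⁻¹) •
        (derivative^[i] (u j) * (-X) ^ (k - j)) =
        ((k.choose j : ℕ) : Polynomial ℂ) * (-X) ^ (k - j) * hasseDeriv i (u j) := by
      intro j
      rw [← aux_hasse, smul_eq_C_mul, smul_eq_C_mul, C_mul]
      simp only [map_natCast]
      ring
    simp only [this]
    apply Finset.sum_subset
    · intro j hj
      simp only [Finset.mem_Icc, Finset.mem_range] at *
      omega
    · intro j _ hj
      simp only [Finset.mem_Icc, not_and_or, not_le] at hj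
      rcases hj with hj | hj
      · rw [aux_zero i (u j) ((hdeg j).trans_lt hj), mul_zero]
      · simp [Nat.choose_eq_zero_of_lt hj]
  have hr' : ∀ k ∈ Finset.range M, r k = ∑ i ∈ Finset.range M, s k i * q i := by
    intro k hk
    rw [hr]
    apply Finset.sum_subset
    · intro j hj
      simp only [Finset.mem_range] at *
      omega
    · intro i _ hi
      simp only [Finset.mem_range, not_lt] at hi
      rw [hs, Finset.Icc_eq_empty (by omega), Finset.sum_empty, zero_mul]
  have hL : ∑ i ∈ Finset.range ((T w).natDegree + 1),
      (i.factorial : ℂ)⁻¹ • (q i * derivative^[i] (T w)) =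
      ∑ i ∈ Finset.range M, q i * hasseDeriv i (T w) := by
    simp only [← mul_smul_comm, aux_hasse]
    apply Finset.sum_subset
    · intro j hj
      simp only [Finset.mem_range] at *
      omega
    · intro i _ hi
      simp only [Finset.mem_range, not_lt] at hi
      rw [aux_zero i _ (by omega), mul_zero]
  rw [hL]
  simp only [← mul_smul_comm, aux_hasse]
  have hR : ∀ k ∈ Finset.range M, r k * hasseDeriv k w =
      ∑ i ∈ Finset.range M, ∑ j ∈ Finset.range M, q i * hasseDeriv i (u j) *
        (((k.choose j : ℕ) : Polynomial ℂ) * (-X) ^ (k - j) * hasseDeriv k w) := by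
    intro k hk
    rw [hr' k hk, Finset.sum_mul]
    apply Finset.sum_congr rfl
    intro i _
    rw [hs' k hk, Finset.sum_mul, Finset.sum_mul]
    apply Finset.sum_congr rfl
    intro j _
    ring
  rw [Finset.sum_congr rfl hR, Finset.sum_comm]
  apply Finset.sum_congr rfl
  intro i _
  rw [Finset.sum_comm, hTw, map_sum, Finset.mul_sum]
  apply Finset.sum_congr rfl
  intro j _
  rw [← Finset.mul_sum, aux_coeff M j w (by omega), ← smul_eq_C_mul, map_smul, smul_eq_C_mul]
  ring
end

section
/- Let f_0, f_1, g_0, g_1 ∈ ℂ with g_1 ≠ 0, and let (u_n)_{n≥0} be a sequence of monic polynomials in ℂ[t] with deg u_n = n satisfying the second-order differential equation (g_0 + g_1 t)·u_n′(t) + ((f_0 + f_1 t)/2)·u_n″(t) = n·g_1·u_n(t) for every n ≥ 0. Then the sequence (u_n) satisfies the three-term recurrence relation: for every n ≥ 1, t·u_n(t) = u_{n+1}(t) − (g_0/g_1 + n·f_1/g_1)·u_n(t) + ( n·(f_1 g_0 − f_0 g_1)/(2 g_1²) + n(n−1)·f_1²/(4 g_1²) )·u_{n−1}(t). In particular (u_n)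 is an orthogonal polynomial sequence, and its Jacobi matrix is L = X − (g_0/g_1) I − (f_1/g_1) D X + ((f_1 g_0 − f_0 g_1)/(2 g_1²)) D + (f_1²/(4 g_1²)) D² X. -/
open Polynomial

/-- The differential operator. -/
noncomputable def opB (f₀ f₁ g₀ g₁ : ℂ) (p : Polynomial ℂ) : Polynomial ℂ :=
  (C g₀ + C g₁ * X) * derivative p +
    C (1/2 : ℂ) * ((C f₀ + C f₁ * X) * derivative (derivative p))

lemma opB_coeff (f₀ f₁ g₀ g₁ : ℂ) (p : Polynomial ℂ) (k : ℕ) :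
    (opB f₀ f₁ g₀ g₁ p).coeff k = g₁ * k * p.coeff k
      + (g₀ + f₁ * k / 2) * (k + 1) * p.coeff (k + 1)
      + f₀ / 2 * (k + 1) * (k + 2) * p.coeff (k + 2) := by
  unfold opB
  rcases k with _ | k
  · simp only [add_mul, mul_add, mul_assoc, coeff_add, coeff_C_mul, coeff_X_mul_zero,
      coeff_derivative]
    push_cast
    ring
  · simp only [add_mul, mul_add, mul_assoc, coeff_add, coeff_C_mul, coeff_X_mul,
      coeff_derivative]
    push_cast
    ring

lemma opB_zero_of (f₀ f₁ g₀ g₁ : ℂ) (hg : g₁ ≠ 0) (q : Polynomial ℂ) (m : ℕ)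
    (h : opB f₀ f₁ g₀ g₁ q = C ((m : ℂ) * g₁) * q) (hm : q.coeff m = 0) : q = 0 := by
  by_contra hq
  have h1 := congrArg (fun r => coeff r q.natDegree) h
  simp only [opB_coeff, coeff_C_mul] at h1
  rw [coeff_eq_zero_of_natDegree_lt (show q.natDegree < q.natDegree + 1 by omega),
    coeff_eq_zero_of_natDegree_lt (show q.natDegree < q.natDegree + 2 by omega)] at h1
  have hl : q.coeff q.natDegree ≠ 0 := by simpa using hq
  have h2 : g₁ * q.coeff q.natDegree * ((q.natDegree : ℂ) - m) = 0 := by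
    linear_combination h1
  have h3 : (q.natDegree : ℂ) - m = 0 := by
    rcases mul_eq_zero.1 h2 with h | h
    · exact absurd h (mul_ne_zero hg hl)
    · exact h
  have h4 : q.natDegree = m := by exact_mod_cast sub_eq_zero.1 h3
  rw [h4] at hl
  exact hl hm

/-- The monic eigenpolynomials of `B = (g₀+g₁t)∂ + ((f₀+f₁t)/2)∂²` with eigenvalue
`n·g₁` (`g₁ ≠ 0`) satisfy the three-term recurrence
`t·u_n = u_{n+1} − (g₀/g₁ + n f₁/g₁)·u_n
  + (n(f₁g₀ − f₀g₁)/(2g₁²) + n(n−1)f₁²/(4g₁²))·u_{n−1}`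
for `n ≥ 1`; in particular `(u_n)` is an orthogonal polynomial sequence. -/
theorem eigenpolynomials_three_term_recurrence
    (f₀ f₁ g₀ g₁ : ℂ) (hg₁ : g₁ ≠ 0)
    (u : ℕ → Polynomial ℂ)
    (hmonic : ∀ n, (u n).Monic) (hdeg : ∀ n, (u n).natDegree = n)
    (hode : ∀ n : ℕ,
      (C g₀ + C g₁ * X) * derivative (u n) +
        ((1 : ℂ) / 2) • ((C f₀ + C f₁ * X) * derivative (derivative (u n))) =
      ((n : ℂ) * g₁) • u n) :
    ∀ n : ℕ, 1 ≤ n →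
      X * u n =
        u (n + 1) - (g₀ / g₁ + (n : ℂ) * f₁ / g₁) • u n +
          ((n : ℂ) * (f₁ * g₀ - f₀ * g₁) / (2 * g₁ ^ 2) +
            (n : ℂ) * ((n : ℂ) - 1) * f₁ ^ 2 / (4 * g₁ ^ 2)) • u (n - 1) := by
  intro n hn
  obtain ⟨k, rfl⟩ : ∃ k, n = k + 1 := ⟨n - 1, by omega⟩
  have hB : ∀ n, opB f₀ f₁ g₀ g₁ (u n) = C ((n : ℂ) * g₁) * u n := by
    intro n
    have := hode n
    rw [smul_eq_C_mul, smul_eq_C_mul] at this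
    exact this
  have hlead : ∀ n, (u n).coeff n = 1 := by
    intro n
    have := (hmonic n).coeff_natDegree
    rwa [hdeg n] at this
  have hz : ∀ n j, n < j → (u n).coeff j = 0 := fun n j h =>
    coeff_eq_zero_of_natDegree_lt (by rw [hdeg]; exact h)
  have hco : ∀ n j, g₁ * j * (u n).coeff j
      + (g₀ + f₁ * j / 2) * (j + 1) * (u n).coeff (j + 1)
      + f₀ / 2 * (j + 1) * (j + 2) * (u n).coeff (j + 2) = n * g₁ * (u n).coeff j := by
    intro n j
    rw [← opB_coeff, hB, coeff_C_mul]
  have hA : ∀ j : ℕ, g₁ * (u (j + 1)).coeff j = (g₀ + f₁ * j / 2) * (j + 1) := by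
    intro j
    have := hco (j + 1) j
    rw [hlead, hz (j + 1) (j + 2) (by omega)] at this
    push_cast at this
    linear_combination -this
  have hA2 : ∀ j : ℕ, 2 * g₁ * (u (j + 2)).coeff j =
      (g₀ + f₁ * j / 2) * (j + 1) * (u (j + 2)).coeff (j + 1)
        + f₀ / 2 * (j + 1) * (j + 2) := by
    intro j
    have := hco (j + 2) j
    rw [hlead] at this
    push_cast at this
    linear_combination -this
  simp only [Nat.add_sub_cancel]
  generalize hα : (g₀ / g₁ + ((k + 1 : ℕ) : ℂ) * f₁ / g₁) = α
  generalize hβ : (((k + 1 : ℕ) : ℂ) * (f₁ * g₀ - f₀ * g₁) / (2 * g₁ ^ 2) +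
            ((k + 1 : ℕ) : ℂ) * (((k + 1 : ℕ) : ℂ) - 1) * f₁ ^ 2 / (4 * g₁ ^ 2)) = β
  have hα' : α * g₁ = g₀ + (k + 1) * f₁ := by
    rw [← hα]; push_cast; field_simp
  have hβ' : 4 * g₁ ^ 2 * β = 2 * (k + 1) * (f₁ * g₀ - f₀ * g₁) + (k + 1) * k * f₁ ^ 2 := by
    rw [← hβ]; push_cast; field_simp; ring
  have e0 := hB k
  have e1 := hB (k + 1)
  have e2 := hB (k + 1 + 1)
  have d1 := congrArg derivative e1
  set p := X * u (k + 1) - u (k + 1 + 1) + C α * u (k + 1) - C β * u k with hp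
  have hpz : p = 0 := by
    have hq : opB f₀ f₁ g₀ g₁ p - C ((k : ℂ) * g₁) * p = 0 := by
      apply opB_zero_of f₀ f₁ g₀ g₁ hg₁ _ (k + 2)
      · have hq1 : opB f₀ f₁ g₀ g₁ p - C ((k : ℂ) * g₁) * p =
            C g₁ * X * u (k + 1) + (C g₀ + C g₁ * X) * u (k + 1)
            + (C f₀ + C f₁ * X) * derivative (u (k + 1)) + C (α * g₁) * u (k + 1)
            - C (2 * g₁) * u (k + 1 + 1) := by
          have hh : C (1/2 : ℂ) * 2 = (1 : ℂ[X]) := by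
            rw [← C_ofNat, ← C_mul, ← C_1]; norm_num
          rw [hp]
          unfold opB at *
          simp only [derivative_add, derivative_sub, derivative_mul, derivative_X, derivative_C,
            C_mul, map_natCast, map_ofNat, derivative_zero, derivative_one] at *
          push_cast at *
          linear_combination (X + C α) * e1 - e2 - C β * e0
            + (C f₀ + C f₁ * X) * derivative (u (k + 1)) * hh
        rw [hq1, hα']
        have hh : C (1/2 : ℂ) * 2 = (1 : ℂ[X]) := by
          rw [← C_ofNat, ← C_mul, ← C_1]; norm_num
        clear hp hq1
        clear_value p
        unfold opB at *
        simp only [derivative_add, derivative_sub, derivative_mul, derivative_X, derivative_C,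
            C_mul, C_add, map_natCast, map_ofNat, derivative_zero, derivative_natCast,
            derivative_ofNat, derivative_one, C_1] at *
        push_cast at *
        linear_combination (2 * C g₁ * X + 2 * C g₀ + (k + 2) * C f₁) * e1
            + (C f₀ + C f₁ * X) * d1 - 2 * C g₁ * e2
            + (C f₀ + C f₁ * X) * (2 * C g₁ * derivative (u (k + 1))) * hh
      · have hpk : ∀ j, k + 1 ≤ j → p.coeff (j + 1) = 0 := by
          intro j hj
          rw [hp]
          simp only [coeff_add, coeff_sub, coeff_C_mul, coeff_X_mul]
          rw [hz (k + 1) (j + 1) (by omega), hz k (j + 1) (by omega)]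
          rcases hj.eq_or_lt with h | h
          · subst h; rw [hlead, hlead]; ring
          · rw [hz _ _ h, hz _ _ (by omega : k + 1 + 1 < j + 1)]; ring
        rw [coeff_sub, opB_coeff, coeff_C_mul, hpk (k + 1) le_rfl, hpk (k + 2) (by omega),
          hpk (k + 3) (by omega)]
        ring
    apply opB_zero_of f₀ f₁ g₀ g₁ hg₁ _ k (sub_eq_zero.1 hq)
    have a1 := hA k
    have a2 := hA (k + 1)
    have b2 := hA2 k
    rw [hp]
    simp only [coeff_add, coeff_sub, coeff_C_mul, hlead]
    have hg4 : 4 * g₁ ^ 2 ≠ 0 := by simpa using hg₁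
    apply (mul_eq_zero.1 _).resolve_left hg4
    push_cast at *
    rcases k with _ | k
    · simp only [coeff_X_mul_zero]
      push_cast at *
      simp only [zero_add] at *
      linear_combination 4 * g₁ * α * a1 - 2 * g₁ * b2 - 2 * g₀ * a2 - hβ' + 4 * g₀ * hα'
    · have c1 := hA2 k
      simp only [coeff_X_mul]
      push_cast at *
      have a1' := a1
      linear_combination 2 * g₁ * c1 + 2 * (g₀ + f₁ * k / 2) * (k + 1) * a1
        + 4 * g₁ * α * a1 + 4 * (g₀ + f₁ * (k + 1) / 2) * (k + 2) * hα'
        - 2 * g₁ * b2 - 2 * (g₀ + f₁ * (k + 1) / 2) * (k + 2) * a2 - hβ'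
  rw [smul_eq_C_mul, smul_eq_C_mul]
  linear_combination hpz
end

section
/- Let f_0, f_1, g_0, g_1 ∈ ℂ with g_1 ≠ 0, and let (u_n)_{n≥0} be a sequence of monic polynomials in ℂ[t] with deg u_n = n satisfying (g_0 + g_1 t)·u_n′(t) + ((f_0 + f_1 t)/2)·u_n″(t) = n·g_1·u_n(t) for every n ≥ 0. Define the degree-one polynomials w_0(t) = g_0/g_1 + t, w_1(t) = (f_0 g_1 + f_1 g_0)/(2 g_1²) + (f_1/g_1)·t, and w_2(t) = f_0 f_1/(2 g_1²) + (f_1²/(2 g_1²))·t. Then for every n ≥ 0, u_{n+1}(t) = w_0(t)·u_n(t) + w_1(t)·u_n′(t) + (1/2)·w_2(t)·u_n″(t); that is, the monomiality multiplication operator of (u_n) is multiplication by t plus a differential operator of order two with polynomial coefficients of degree one. -/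
open Polynomial

/-- A degree-bounded eigenpolynomial vanishes. -/
lemma eigen_eq_zero (a p q : ℂ) (m : ℕ) (v : Polynomial ℂ)
    (hv : (C a + X) * derivative v + (C p + C q * X) * derivative (derivative v) = C (m : ℂ) * v)
    (hm : v.coeff m = 0) : v = 0 := by
  by_contra h
  have h1 : v.coeff v.natDegree ≠ 0 := by
    simpa using h
  have hz : ∀ k, v.natDegree < k → v.coeff k = 0 := fun k hk => coeff_eq_zero_of_natDegree_lt hk
  have hc := congrArg (fun r => coeff r v.natDegree) hv
  have h2 : ((v.natDegree : ℂ) - m) * v.coeff v.natDegree = 0 := by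
    generalize v.natDegree = d at *
    cases d with
    | zero =>
      simp [add_mul, coeff_derivative, mul_assoc, hz 1, hz 2] at hc
      simp
      tauto
    | succ k =>
      simp [add_mul, coeff_derivative, mul_assoc, coeff_X_mul, hz (k + 1 + 1), hz (k + 1 + 1 + 1)] at hc
      push_cast
      linear_combination hc
  rcases mul_eq_zero.1 h2 with h3 | h3
  · have : v.natDegree = m := by exact_mod_cast sub_eq_zero.1 h3
    exact h1 (this ▸ hm)
  · exact h1 h3

lemma norm_core (a p q : ℂ) (n : ℕ) (u w : Polynomial ℂ)
    (hu : u.natDegree = n) (hum : u.Monic) (hw : w.natDegree = n + 1) (hwm : w.Monic)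
    (eu : (C a + X) * derivative u + (C p + C q * X) * derivative (derivative u) = C (n : ℂ) * u)
    (ew : (C a + X) * derivative w + (C p + C q * X) * derivative (derivative w)
      = C ((n + 1 : ℕ) : ℂ) * w) :
    w = (C a + X) * u + (C (p + q * a) + C (2 * q) * X) * derivative u
      + (C (p * q) + C (q ^ 2) * X) * derivative (derivative u) := by
  rw [eq_comm, ← sub_eq_zero]
  apply eigen_eq_zero a p q (n + 1)
  · have e1 := congrArg derivative eu
    have e2 := congrArg derivative e1
    simp only [derivative_mul, derivative_add, derivative_sub, derivative_C, derivative_X,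
      map_add, map_mul, map_pow, Nat.cast_add, Nat.cast_one, map_one, zero_mul, zero_add, mul_one,
      add_zero, one_mul, derivative_zero, derivative_one, mul_zero] at *
    simp only [derivative_sub, derivative_add, derivative_mul, derivative_C, derivative_X,
      derivative_pow, derivative_zero, derivative_one, zero_mul, zero_add, mul_one, mul_zero,
      add_zero, one_mul]
    have : (C 2 : Polynomial ℂ) = 2 := rfl
    simp only [this, derivative_ofNat]
    linear_combination (C a + X) * eu + (C p + C q * C a + 2 * C q * X) * e1
      + (C p * C q + C q ^ 2 * X) * e2 - ew
  · have hz : ∀ k, n < k → u.coeff k = 0 := fun k hk => coeff_eq_zero_of_natDegree_lt (hu ▸ hk)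
    have h1 : u.coeff n = 1 := by rw [← hu]; exact hum
    have h2 : w.coeff (n + 1) = 1 := by rw [← hw]; exact hwm
    simp only [add_mul, coeff_sub, coeff_add, mul_assoc, coeff_C_mul, coeff_X_mul,
      coeff_derivative]
    rw [hz (n + 1) (by omega), hz (n + 1 + 1) (by omega), hz (n + 1 + 1 + 1) (by omega), h1, h2]
    ring

/-- The monomiality multiplication operator of the monic eigenpolynomials of
`B = (g₀+g₁t)∂ + ((f₀+f₁t)/2)∂²` (eigenvalue `n·g₁`, `g₁ ≠ 0`) is multiplication by `t`
plus a second-order differential operator with degree-one polynomial coefficients: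
`u_{n+1} = w₀·u_n + w₁·u_n′ + (1/2)·w₂·u_n″`, where `w₀(t) = g₀/g₁ + t`,
`w₁(t) = (f₀g₁+f₁g₀)/(2g₁²) + (f₁/g₁)t`, `w₂(t) = f₀f₁/(2g₁²) + (f₁²/(2g₁²))t`. -/
theorem eigenpolynomials_multiplication_operator
    (f₀ f₁ g₀ g₁ : ℂ) (hg₁ : g₁ ≠ 0)
    (u : ℕ → Polynomial ℂ)
    (hmonic : ∀ n, (u n).Monic) (hdeg : ∀ n, (u n).natDegree = n)
    (hode : ∀ n : ℕ,
      (C g₀ + C g₁ * X) * derivative (u n) +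
        ((1 : ℂ) / 2) • ((C f₀ + C f₁ * X) * derivative (derivative (u n))) =
      ((n : ℂ) * g₁) • u n) :
    ∀ n : ℕ,
      u (n + 1) =
        (C (g₀ / g₁) + X) * u n +
          (C ((f₀ * g₁ + f₁ * g₀) / (2 * g₁ ^ 2)) + C (f₁ / g₁) * X) * derivative (u n) +
          ((1 : ℂ) / 2) •
            ((C (f₀ * f₁ / (2 * g₁ ^ 2)) + C (f₁ ^ 2 / (2 * g₁ ^ 2)) * X) *
              derivative (derivative (u n))) := by
  have key : ∀ n : ℕ, (C (g₀ / g₁) + X) * derivative (u n) +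
      (C (f₀ / (2 * g₁)) + C (f₁ / (2 * g₁)) * X) * derivative (derivative (u n))
      = C (n : ℂ) * u n := by
    intro n
    have h := congrArg (fun r => C (1 / g₁) * r) (hode n)
    simp only [smul_eq_C_mul] at h
    have c1 : (C (g₀ / g₁) : Polynomial ℂ) = C (1 / g₁) * C g₀ := by
      rw [← C_mul]; congr 1; field_simp
    have c2 : (C (f₀ / (2 * g₁)) : Polynomial ℂ) = C (1 / g₁) * C (1 / 2) * C f₀ := by
      rw [← C_mul, ← C_mul]; congr 1; field_simp
    have c3 : (C (f₁ / (2 * g₁)) : Polynomial ℂ) = C (1 / g₁) * C (1 / 2) * C f₁ := by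
      rw [← C_mul, ← C_mul]; congr 1; field_simp
    have c4 : (C (1 / g₁) * C g₁ : Polynomial ℂ) = 1 := by
      rw [← C_mul, one_div_mul_cancel hg₁, C_1]
    rw [c1, c2, c3]
    rw [C_mul] at h
    linear_combination h + (C (n : ℂ) * u n - X * derivative (u n)) * c4
  intro n
  rw [norm_core _ _ _ n (u n) (u (n + 1)) (hdeg n) (hmonic n) (hdeg _) (hmonic _) (key n)
    (key (n + 1))]
  have d1 : f₀ / (2 * g₁) + f₁ / (2 * g₁) * (g₀ / g₁)
      = (f₀ * g₁ + f₁ * g₀) / (2 * g₁ ^ 2) := by field_simp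
  have d2 : 2 * (f₁ / (2 * g₁)) = f₁ / g₁ := by field_simp
  have d3 : f₀ / (2 * g₁) * (f₁ / (2 * g₁)) = 1 / 2 * (f₀ * f₁ / (2 * g₁ ^ 2)) := by
    field_simp; try ring
  have d4 : (f₁ / (2 * g₁)) ^ 2 = 1 / 2 * (f₁ ^ 2 / (2 * g₁ ^ 2)) := by
    field_simp; try ring
  rw [d1, d2, d3, d4, smul_eq_C_mul, C_mul, C_mul]
  ring
end

section
/- Let f_0, f_1, g_0, g_1 ∈ ℂ with g_1 ≠ 0, and let (u_n)_{n≥0} be a sequence of monic polynomials in ℂ[t] with deg u_n = n satisfying (g_0 + g_1 t)·u_n′(t) + ((f_0 + f_1 t)/2)·u_n″(t) = n·g_1·u_n(t) for every n ≥ 0. Then for every n ≥ 1, Σ_{k=0}^{n−1} (−f_1/(2 g_1))^k · u_n^{(k+1)}(t) = n · u_{n−1}(t), where u_n^{(k+1)} denotes the (k+1)-st derivative of u_n; that is, the monomiality lowering operator of (u_n) is P = Σ_{k≥0} (−f_1/(2g_1))^k D^{k+1} = D exp(−(f_1/(2g_1)) D), differentiation followed by a translation. -/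
open Polynomial

/-- Uniqueness: an eigenpolynomial for eigenvalue `m * b` with zero `m`-th coefficient is zero. -/
theorem eigen_unique_aux (a b e f : ℂ) (hb : b ≠ 0) (m : ℕ) (d : Polynomial ℂ)
    (hd : (C a + C b * X) * derivative d + (C e + C f * X) * derivative (derivative d) =
      C ((m : ℂ) * b) * d) (hm : d.coeff m = 0) : d = 0 := by
  by_contra h0
  have hl : d.coeff d.natDegree ≠ 0 := by
    simpa using h0
  have h1 : ∀ k, d.natDegree < k → d.coeff k = 0 := fun k hk =>
    coeff_eq_zero_of_natDegree_lt hk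
  generalize d.natDegree = j at hl h1
  have hc := congrArg (fun p => coeff p j) hd
  have key : ((j : ℂ) - m) * b * d.coeff j = 0 := by
    cases j with
    | zero =>
      simp [add_mul, mul_assoc, coeff_derivative, h1] at hc
      simp
      tauto
    | succ i =>
      simp [add_mul, mul_assoc, coeff_derivative, h1] at hc
      push_cast
      linear_combination hc
  have hj : (j : ℂ) = m := by
    have := (mul_eq_zero.1 key).resolve_right hl
    exact sub_eq_zero.1 ((mul_eq_zero.1 this).resolve_right hb)
  have : j = m := by exact_mod_cast hj
  exact hl (this ▸ hm)

/-- The monomiality lowering operator of the monic eigenpolynomials of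
`B = (g₀+g₁t)∂ + ((f₀+f₁t)/2)∂²` (eigenvalue `n·g₁`, `g₁ ≠ 0`) is
`P = Σ_k (−f₁/(2g₁))^k D^{k+1} = D·exp(−(f₁/(2g₁))D)`:
for `n ≥ 1`, `Σ_{k=0}^{n−1} (−f₁/(2g₁))^k u_n^{(k+1)} = n·u_{n−1}`. -/
theorem eigenpolynomials_lowering_operator
    (f₀ f₁ g₀ g₁ : ℂ) (hg₁ : g₁ ≠ 0)
    (u : ℕ → Polynomial ℂ)
    (hmonic : ∀ n, (u n).Monic) (hdeg : ∀ n, (u n).natDegree = n)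
    (hode : ∀ n : ℕ,
      (C g₀ + C g₁ * X) * derivative (u n) +
        ((1 : ℂ) / 2) • ((C f₀ + C f₁ * X) * derivative (derivative (u n))) =
      ((n : ℂ) * g₁) • u n) :
    ∀ n : ℕ, 1 ≤ n →
      ∑ k ∈ Finset.range n, (-f₁ / (2 * g₁)) ^ k • derivative^[k + 1] (u n) =
        (n : ℂ) • u (n - 1) := by
  intro n hn
  obtain ⟨m, rfl⟩ : ∃ m, n = m + 1 := ⟨n - 1, by omega⟩
  simp only [Nat.add_sub_cancel]
  set c : ℂ := -f₁ / (2 * g₁) with hc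
  have hcg : f₁ / 2 + c * g₁ = 0 := by rw [hc]; field_simp; ring
  have hcC : C (f₁ / 2) + C c * C g₁ = 0 := by rw [← C_mul, ← C_add, hcg, C_0]
  have hode' : ∀ n : ℕ, (C g₀ + C g₁ * X) * derivative (u n) +
      (C (f₀ / 2) + C (f₁ / 2) * X) * derivative (derivative (u n)) =
      C ((n : ℂ) * g₁) * u n := by
    intro n
    have h := hode n
    rw [smul_eq_C_mul, smul_eq_C_mul] at h
    rw [← h]
    simp only [div_eq_mul_inv, C_mul, C_1]
    ring
  have hD : ∀ n : ℕ, C g₁ * derivative (u n) + (C g₀ + C g₁ * X) * derivative (derivative (u n)) +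
      (C (f₁ / 2) * derivative (derivative (u n)) +
      (C (f₀ / 2) + C (f₁ / 2) * X) * derivative (derivative (derivative (u n)))) =
      C (n : ℂ) * C g₁ * derivative (u n) := by
    intro n
    have h := congrArg derivative (hode' n)
    simp only [derivative_add, derivative_mul, derivative_C, derivative_X, C_mul] at h
    linear_combination h
  have hcoeff : ∀ k, (u k).coeff k = 1 := fun k => by
    have := (hmonic k).coeff_natDegree
    rwa [hdeg] at this
  have hrec : derivative (u (m + 1)) - C ((m : ℂ) + 1) * (u m - C c * derivative (u m)) = 0 := by
    apply eigen_unique_aux (g₀ + f₁ / 2) g₁ (f₀ / 2) (f₁ / 2) hg₁ m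
    · have h1 := hD (m + 1)
      have h2 := hode' m
      have h3 := hD m
      simp only [derivative_sub, derivative_mul, derivative_add, derivative_C, derivative_one,
        derivative_zero, C_add, C_mul, C_1, Nat.cast_add,
        Nat.cast_one] at h1 h2 h3 ⊢
      linear_combination h1 - (C (m : ℂ) + 1) * (h2 - C c * h3) -
        (C (m : ℂ) + 1) * derivative (u m) * hcC
    · have : (u m).coeff (m + 1) = 0 := coeff_eq_zero_of_natDegree_lt (by rw [hdeg]; omega)
      simp only [coeff_sub, coeff_C_mul, coeff_derivative, hcoeff, this]
      ring
  have hrec' : derivative (u (m + 1)) = ((m : ℂ) + 1) • (u m - c • derivative (u m)) := by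
    rw [smul_eq_C_mul, smul_eq_C_mul]; exact sub_eq_zero.1 hrec
  have hterm : ∀ k, c ^ k • derivative^[k + 1] (u (m + 1)) = ((m : ℂ) + 1) •
      (c ^ k • derivative^[k] (u m) - c ^ (k + 1) • derivative^[k + 1] (u m)) := by
    intro k
    rw [Function.iterate_succ_apply, hrec', iterate_derivative_smul, iterate_derivative_sub,
      iterate_derivative_smul, ← Function.iterate_succ_apply, smul_comm, smul_sub, smul_smul,
      ← pow_succ]
  have hz : derivative^[m + 1] (u m) = 0 :=
    iterate_derivative_eq_zero (by rw [hdeg]; omega)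
  rw [Finset.sum_congr rfl (fun k _ => hterm k), ← Finset.smul_sum,
    Finset.sum_range_sub' (fun k => c ^ k • derivative^[k] (u m)), hz]
  simp
end
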